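/- Let A be a bialgebra over K and H a Hopf algebra over K, and suppose i : H → A and π : A → H are bialgebra morphisms with π ∘ i = id_H. Define a·h = a i(h) for a ∈ A, h ∈ H, and δ_R : A → A ⊗ H by δ_R(a) = ∑ a₍₁₎ ⊗ π(a₍₂₎). Then A is a right H-Hopf module algebra with these structures: δ_R is a coassociative counital right H-coaction, δ_R(a·h) = δ_R(a)Δ(h), (ab)·h = a(b·h), and δ_R(ab) = ∑ a₍₁₎b₍₁₎ ⊗ π(a₍₂₎)π(b₍₂₎) for all a, b ∈ A and h ∈ H. -/

import Mathlib

/-!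
STATEMENT 8: Let `A` be a bialgebra, `H` a Hopf algebra, and `i : H → A`, `π : A → H`
bialgebra morphisms with `π ∘ i = id`. Then `A` is a right `H`-Hopf module algebra with
`a · h = a i(h)` and `δ_R(a) = ∑ a₍₁₎ ⊗ π(a₍₂₎)`: `δ_R` is a coassociative counital right
coaction, `δ_R(a · h) = δ_R(a)Δ(h)`, `(ab) · h = a(b · h)`, and
`δ_R(ab) = ∑ a₍₁₎b₍₁₎ ⊗ π(a₍₂₎)π(b₍₂₎)`.
-/

open TensorProduct Coalgebra HopfAlgebra LinearMap

theorem bialgebra_with_projection_is_rightHopfModuleAlgebra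
    (K : Type*) [Field K] [CharZero K]
    (A : Type*) [Ring A] [Bialgebra K A]
    (H : Type*) [Ring H] [HopfAlgebra K H]
    (i : H →ₐc[K] A) (π : A →ₐc[K] H)
    (hπi : ∀ h : H, π (i h) = h) :
    -- the action a · h = a i(h) and the coaction δ_R(a) = ∑ a₍₁₎ ⊗ π(a₍₂₎)
    let act : A ⊗[K] H →ₗ[K] A :=
      LinearMap.mul' K A ∘ₗ (LinearMap.lTensor A (i : H →ₗ[K] A))
    let δ : A →ₗ[K] A ⊗[K] H :=
      (LinearMap.lTensor A (π : A →ₗ[K] H)) ∘ₗ Coalgebra.comul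
    -- δ is a coassociative counital right H-comodule structure
    (∀ a : A,
      (TensorProduct.assoc K A H H) ((δ.rTensor H) (δ a)) =
        ((Coalgebra.comul (R := K) (A := H)).lTensor A) (δ a)) ∧
    (∀ a : A,
      (TensorProduct.rid K A) (((Coalgebra.counit (R := K) (A := H)).lTensor A) (δ a)) = a) ∧
    -- the action is a unital associative right H-action
    (∀ a : A, act (a ⊗ₜ[K] (1 : H)) = a) ∧
    (∀ (a : A) (h h' : H),
      act (act (a ⊗ₜ[K] h) ⊗ₜ[K] h') = act (a ⊗ₜ[K] (h * h'))) ∧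
    -- Hopf module compatibility: δ(a · h) = δ(a)Δ(h)
    (∀ (a : A) (h : H),
      δ (act (a ⊗ₜ[K] h)) =
        (TensorProduct.map act (LinearMap.mul' K H))
          ((TensorProduct.tensorTensorTensorComm K A H H H)
            (δ a ⊗ₜ[K] Coalgebra.comul h))) ∧
    -- (ab) · h = a (b · h)
    (∀ (a b : A) (h : H), act ((a * b) ⊗ₜ[K] h) = a * act (b ⊗ₜ[K] h)) ∧
    -- δ(ab) = ∑ a₍₁₎b₍₁₎ ⊗ π(a₍₂₎)π(b₍₂₎)
    (∀ a b : A,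
      δ (a * b) =
        (TensorProduct.map (LinearMap.mul' K A) (LinearMap.mul' K H))
          ((TensorProduct.tensorTensorTensorComm K A H A H) (δ a ⊗ₜ[K] δ b))) := by
  intro act δ
  have hact : ∀ a h, act (a ⊗ₜ[K] h) = a * i h := fun a h => rfl
  have hδ : ∀ a, δ a = (LinearMap.lTensor A (π : A →ₗ[K] H)) (Coalgebra.comul a) := fun a => rfl
  have hπm : ∀ q : A, Coalgebra.comul (R := K) (π q) =
      TensorProduct.map (π : A →ₗ[K] H) (π : A →ₗ[K] H) (Coalgebra.comul q) := fun q =>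
    (CoalgHomClass.map_comp_comul_apply π q).symm
  have him : ∀ q : H, Coalgebra.comul (R := K) (i q) =
      TensorProduct.map (i : H →ₗ[K] A) (i : H →ₗ[K] A) (Coalgebra.comul q) := fun q =>
    (CoalgHomClass.map_comp_comul_apply i q).symm
  have hmul : ∀ x y : A ⊗[K] H,
      (TensorProduct.map (LinearMap.mul' K A) (LinearMap.mul' K H))
        ((TensorProduct.tensorTensorTensorComm K A H A H) (x ⊗ₜ[K] y)) = x * y := by
    intro x y
    induction x with
    | zero => simp
    | add x x' h h' => rw [TensorProduct.add_tmul, map_add, map_add, h, h', add_mul]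
    | tmul a h =>
      induction y with
      | zero => simp
      | add x x' h h' => rw [TensorProduct.tmul_add, map_add, map_add, h, h', mul_add]
      | tmul b k => simp
  have hlm : ∀ x y : A ⊗[K] A, (LinearMap.lTensor A (π : A →ₗ[K] H)) (x * y) =
      (LinearMap.lTensor A (π : A →ₗ[K] H)) x * (LinearMap.lTensor A (π : A →ₗ[K] H)) y := by
    intro x y
    induction x with
    | zero => simp
    | add x x' h h' => rw [add_mul, map_add, map_add, h, h', add_mul]
    | tmul a h =>
      induction y with
      | zero => simp
      | add x x' h h' => rw [mul_add, map_add, map_add, h, h', mul_add]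
      | tmul b k => simp
  have hδm : ∀ a b, δ (a * b) = δ a * δ b := by
    intro a b
    rw [hδ, hδ, hδ, Bialgebra.comul_mul, hlm]
  refine ⟨?_, ?_, ?_, ?_, ?_, ?_, ?_⟩
  · intro a
    have h1 : ∀ x : A ⊗[K] A, (TensorProduct.assoc K A H H)
        ((δ.rTensor H) ((LinearMap.lTensor A (π : A →ₗ[K] H)) x)) =
        TensorProduct.map LinearMap.id (TensorProduct.map (π : A →ₗ[K] H) (π : A →ₗ[K] H))
          (TensorProduct.assoc K A A A ((Coalgebra.comul (R := K) (A := A)).rTensor A x)) := by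
      intro x
      induction x with
      | zero => simp
      | add x y hx hy => simp only [map_add, hx, hy]
      | tmul p q =>
        simp only [LinearMap.lTensor_tmul, LinearMap.rTensor_tmul, hδ]
        generalize (Coalgebra.comul (R := K) p) = z
        induction z with
        | zero => simp
        | add x y hx hy => simp only [map_add, TensorProduct.add_tmul, hx, hy]
        | tmul r s => simp
    have h2 : ∀ x : A ⊗[K] A, ((Coalgebra.comul (R := K) (A := H)).lTensor A)
        ((LinearMap.lTensor A (π : A →ₗ[K] H)) x) =
        TensorProduct.map LinearMap.id (TensorProduct.map (π : A →ₗ[K] H) (π : A →ₗ[K] H))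
          ((Coalgebra.comul (R := K) (A := A)).lTensor A x) := by
      intro x
      induction x with
      | zero => simp
      | add x y hx hy => simp only [map_add, hx, hy]
      | tmul p q =>
        simp only [LinearMap.lTensor_tmul, TensorProduct.map_tmul, LinearMap.id_apply]
        exact congrArg (fun t => p ⊗ₜ[K] t) (hπm q)
    rw [hδ a, h1, h2, Coalgebra.coassoc_apply]
  · intro a
    have h1 : ∀ x : A ⊗[K] A, ((Coalgebra.counit (R := K) (A := H)).lTensor A)
        ((LinearMap.lTensor A (π : A →ₗ[K] H)) x) =
        (Coalgebra.counit (R := K) (A := A)).lTensor A x := by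
      intro x
      induction x with
      | zero => simp
      | add x y hx hy => simp only [map_add, hx, hy]
      | tmul p q =>
        simp only [LinearMap.lTensor_tmul]
        exact congrArg (fun t => p ⊗ₜ[K] t) (CoalgHomClass.counit_comp_apply π q)
    rw [hδ, h1, Coalgebra.lTensor_counit_comul]
    simp
  · intro a
    simp [hact]
  · intro a h h'
    simp [hact, mul_assoc]
  · intro a h
    have h1 : ∀ (x : A ⊗[K] H) (y : H ⊗[K] H), (TensorProduct.map act (LinearMap.mul' K H))
          ((TensorProduct.tensorTensorTensorComm K A H H H) (x ⊗ₜ[K] y)) =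
        x * (LinearMap.lTensor A (π : A →ₗ[K] H))
          (TensorProduct.map (i : H →ₗ[K] A) (i : H →ₗ[K] A) y) := by
      intro x y
      induction x with
      | zero => simp
      | add x x' h h' => rw [TensorProduct.add_tmul, map_add, map_add, h, h', add_mul]
      | tmul a h =>
        induction y with
        | zero => simp
        | add x x' h h' =>
          rw [TensorProduct.tmul_add, map_add, map_add, h, h', map_add, map_add, mul_add]
        | tmul b k => simp [hact, hπi]
    rw [h1, ← him, hact, hδm, ← hδ]
  · intro a b h
    simp [hact, mul_assoc]
  · intro a b
    rw [hmul, hδm]
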